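/- There is a one-to-one correspondence between (isomorphism classes of) covariant first order differential calculi (Γ, d) on X satisfying the freeness condition d a = Σ_i ∂_i(a) d e^i with unique coefficients, and subsets {χ_1,…,χ_M} of the restricted dual X° such that: span{ε, χ_1,…,χ_M} is a right coideal of X°, χ_i(e^j) = δ_{ij}, χ_i(1) = 0, and the operators ∂_i(a) := Σ_j a_{(1)} χ_j(a_{(2)}) S(π^j_i) map X into X. The correspondence sends (Γ, d) to {ε∘∂_1,…,ε∘∂_M}. -/

import Mathlib

open TensorProduct MulOpposite

/-- Membership in the restricted dual. -/
def InRestrictedDual {A : Type} [Ring A] [Algebra ℂ A] (f : A →ₗ[ℂ] ℂ) : Prop :=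
  ∃ (n : ℕ) (g h : Fin n → (A →ₗ[ℂ] ℂ)), ∀ a b : A, f (a * b) = ∑ k, g k a * h k b

/-- A covariant first order differential calculus on a left coideal subalgebra `X ⊆ H`,
satisfying the freeness condition with respect to `e : Fin M → X`. -/
structure CovCalc {H : Type} [Ring H] [HopfAlgebra ℂ H] (X : Subalgebra ℂ H)
    (comulX : X →ₗ[ℂ] H ⊗[ℂ] X) {M : ℕ} (e : Fin M → X) where
  Γ : Type
  [grp : AddCommGroup Γ]
  [modC : Module ℂ Γ]
  [modL : Module X Γ]
  [modR : Module Xᵐᵒᵖ Γ]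
  [comm : SMulCommClass X Xᵐᵒᵖ Γ]
  [tower : IsScalarTower ℂ X Γ]
  d : X →ₗ[ℂ] Γ
  leibniz : ∀ a b : X, d (a * b) = a • d b + op b • d a
  spanning : Submodule.span ℂ {x : Γ | ∃ a b : X, x = a • d b} = ⊤
  free : ∀ ω : Γ, ∃! c : Fin M → X, ω = ∑ i, c i • d (e i)
  covariant : ∃ ΔΓ : Γ →ₗ[ℂ] H ⊗[ℂ] Γ,
    ∀ (a b : X) (ι κ : Type) (_ : Fintype ι) (_ : Fintype κ)
      (a1 : ι → H) (a2 : ι → X) (b1 : κ → H) (b2 : κ → X),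
      comulX a = ∑ t, a1 t ⊗ₜ[ℂ] a2 t → comulX b = ∑ s, b1 s ⊗ₜ[ℂ] b2 s →
      ΔΓ (a • d b) = ∑ t, ∑ s, (a1 t * b1 s) ⊗ₜ[ℂ] (a2 t • d (b2 s))

attribute [instance] CovCalc.grp CovCalc.modC CovCalc.modL CovCalc.modR
  CovCalc.comm CovCalc.tower

variable {H : Type} [Ring H] [HopfAlgebra ℂ H] {X : Subalgebra ℂ H}
  {comulX : X →ₗ[ℂ] H ⊗[ℂ] X} {M : ℕ} {e : Fin M → X}

/-- Isomorphism of two such calculi. -/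
def CovCalc.Iso (c c' : CovCalc X comulX e) : Prop :=
  ∃ φ : c.Γ ≃ₗ[ℂ] c'.Γ,
    (∀ a : X, φ (c.d a) = c'.d a) ∧
    (∀ (a : X) (x : c.Γ), φ (a • x) = a • φ x) ∧
    (∀ (a : X) (x : c.Γ), φ (op a • x) = op a • φ x)

/-- The conditions on a family `{χ_1, …, χ_M} ⊆ X°` in the classification theorem. -/
def GoodChi (X : Subalgebra ℂ H) (comulX : X →ₗ[ℂ] H ⊗[ℂ] X)
    (e : Fin M → X) (π : Fin M → Fin M → H) (χ : Fin M → (X →ₗ[ℂ] ℂ)) : Prop :=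
  -- χ_i(e^j) = δ_ij and χ_i(1) = 0
  (∀ i j, χ i (e j) = if i = j then 1 else 0) ∧ (∀ i, χ i 1 = 0) ∧
  -- span{ε, χ_1, …, χ_M} is a right coideal of X°
  (∀ f : X →ₗ[ℂ] ℂ,
    f ∈ Submodule.span ℂ
      ({(Coalgebra.counit (R := ℂ)).comp X.val.toLinearMap} ∪ Set.range χ) →
    ∃ (n : ℕ) (g h : Fin n → (X →ₗ[ℂ] ℂ)),
      (∀ k, g k ∈ Submodule.span ℂ
        ({(Coalgebra.counit (R := ℂ)).comp X.val.toLinearMap} ∪ Set.range χ)) ∧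
      (∀ k, InRestrictedDual (h k)) ∧
      (∀ a b : X, f (a * b) = ∑ k, g k a * h k b)) ∧
  -- the operators ∂_i(a) = a₍₁₎ χ_j(a₍₂₎) S(π^j_i) map X into X
  (∀ (a : X) (i : Fin M) (ι : Type) (_ : Fintype ι) (a1 : ι → H) (a2 : ι → X),
    comulX a = ∑ t, a1 t ⊗ₜ[ℂ] a2 t →
    (∑ t, ∑ j, χ j (a2 t) • (a1 t * HopfAlgebra.antipode (R := ℂ) (π j i))) ∈ X)

/-- The correspondence: `χ_i = ε ∘ ∂_i`, where `∂_i` are the coefficient operators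
of the calculus `c`. -/
def Corr (c : CovCalc X comulX e) (χ : Fin M → (X →ₗ[ℂ] ℂ)) : Prop :=
  ∀ (a : X) (co : Fin M → X), c.d a = ∑ i, co i • c.d (e i) →
    ∀ i, χ i a = Coalgebra.counit (R := ℂ) ((co i : H))

namespace Stmt6Aux

theorem iX_inj : Function.Injective
    (TensorProduct.map (LinearMap.id : H →ₗ[ℂ] H) X.val.toLinearMap) := by
  have := Module.Flat.lTensor_preserves_injective_linearMap (M := H) X.val.toLinearMap
    (by intro a b h; exact Subtype.ext h)
  exact this

theorem exists_rep (z : H ⊗[ℂ] X) : ∃ (n : ℕ) (a1 : Fin n → H) (a2 : Fin n → X),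
    z = ∑ t, a1 t ⊗ₜ[ℂ] a2 t := by
  induction z using TensorProduct.induction_on with
  | zero => exact ⟨0, fun _ => 0, fun _ => 0, by simp⟩
  | tmul x y => exact ⟨1, fun _ => x, fun _ => y, by simp⟩
  | add x y hx hy =>
    obtain ⟨n, a1, a2, rfl⟩ := hx
    obtain ⟨m, b1, b2, rfl⟩ := hy
    refine ⟨n + m, Fin.append a1 b1, Fin.append a2 b2, ?_⟩
    rw [Fin.sum_univ_add]
    simp

/-- `a ↦ a₍₁₎ φ(a₍₂₎)`. -/
noncomputable def T (comulX : X →ₗ[ℂ] H ⊗[ℂ] X) (φ : X →ₗ[ℂ] ℂ) : X →ₗ[ℂ] H :=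
  (TensorProduct.rid ℂ H).toLinearMap ∘ₗ LinearMap.lTensor H φ ∘ₗ comulX

theorem T_eq_sum (φ : X →ₗ[ℂ] ℂ) (a : X) {ι : Type*} [Fintype ι] (a1 : ι → H) (a2 : ι → X)
    (h : comulX a = ∑ t, a1 t ⊗ₜ[ℂ] a2 t) : T comulX φ a = ∑ t, φ (a2 t) • a1 t := by
  simp [T, h]

theorem comulX_mul (hcomulX : ∀ a : X,
      (TensorProduct.map (LinearMap.id) X.val.toLinearMap) (comulX a)
        = Coalgebra.comul (R := ℂ) (a : H)) (a b : X) :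
    comulX (a * b) = comulX a * comulX b := by
  apply iX_inj
  have h2 : ∀ z : H ⊗[ℂ] X, TensorProduct.map (LinearMap.id : H →ₗ[ℂ] H) X.val.toLinearMap z
      = Algebra.TensorProduct.map (AlgHom.id ℂ H) X.val z := fun _ => rfl
  rw [hcomulX, h2, map_mul, ← h2, ← h2, hcomulX, hcomulX]
  simp

theorem comulX_one (hcomulX : ∀ a : X,
      (TensorProduct.map (LinearMap.id) X.val.toLinearMap) (comulX a)
        = Coalgebra.comul (R := ℂ) (a : H)) :
    comulX 1 = 1 ⊗ₜ 1 := by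
  apply iX_inj
  rw [hcomulX]
  simp [Algebra.TensorProduct.one_def]

/-- counit on X -/
noncomputable abbrev epsX (X : Subalgebra ℂ H) : X →ₗ[ℂ] ℂ :=
  (Coalgebra.counit (R := ℂ)).comp X.val.toLinearMap

theorem T_mul (hcomulX : ∀ a : X,
      (TensorProduct.map (LinearMap.id) X.val.toLinearMap) (comulX a)
        = Coalgebra.comul (R := ℂ) (a : H)) {κ : Type*} [Fintype κ] (φ : X →ₗ[ℂ] ℂ)
    (g h : κ → X →ₗ[ℂ] ℂ) (hφ : ∀ a b, φ (a * b) = ∑ k, g k a * h k b) (a b : X) :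
    T comulX φ (a * b) = ∑ k, T comulX (g k) a * T comulX (h k) b := by
  obtain ⟨n, a1, a2, ha⟩ := exists_rep (comulX a)
  obtain ⟨m, b1, b2, hb⟩ := exists_rep (comulX b)
  have hab : comulX (a * b) = ∑ p : Fin n × Fin m, (a1 p.1 * b1 p.2) ⊗ₜ[ℂ] (a2 p.1 * b2 p.2) := by
    rw [comulX_mul hcomulX, ha, hb, Finset.sum_mul_sum, Fintype.sum_prod_type]
    simp
  rw [T_eq_sum φ _ _ _ hab]
  simp_rw [T_eq_sum _ _ _ _ ha, T_eq_sum _ _ _ _ hb, hφ, Finset.sum_mul_sum, Finset.sum_smul]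
  rw [Finset.sum_comm]
  refine Finset.sum_congr rfl fun k _ => ?_
  rw [Fintype.sum_prod_type]
  simp [smul_smul, mul_comm]

theorem T_val (hcomulX : ∀ a : X,
      (TensorProduct.map (LinearMap.id) X.val.toLinearMap) (comulX a)
        = Coalgebra.comul (R := ℂ) (a : H)) (φ' : H →ₗ[ℂ] ℂ) (a : X) :
    T comulX (φ' ∘ₗ X.val.toLinearMap) a =
      TensorProduct.rid ℂ H (LinearMap.lTensor H φ' (Coalgebra.comul (R := ℂ) (a : H))) := by
  rw [← hcomulX]
  obtain ⟨n, a1, a2, ha⟩ := exists_rep (comulX a)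
  rw [T_eq_sum _ _ _ _ ha, ha]
  simp

theorem T_eps (hcomulX : ∀ a : X,
      (TensorProduct.map (LinearMap.id) X.val.toLinearMap) (comulX a)
        = Coalgebra.comul (R := ℂ) (a : H)) (a : X) :
    T comulX (epsX X) a = a := by
  rw [epsX, T_val hcomulX, Coalgebra.lTensor_counit_comul]
  simp

theorem T_one (hcomulX : ∀ a : X,
      (TensorProduct.map (LinearMap.id) X.val.toLinearMap) (comulX a)
        = Coalgebra.comul (R := ℂ) (a : H)) (φ : X →ₗ[ℂ] ℂ) :
    T comulX φ 1 = algebraMap ℂ H (φ 1) := by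
  simp [T, comulX_one hcomulX, Algebra.algebraMap_eq_smul_one]

theorem comul_T (hcomulX : ∀ a : X,
      (TensorProduct.map (LinearMap.id) X.val.toLinearMap) (comulX a)
        = Coalgebra.comul (R := ℂ) (a : H)) (φ : X →ₗ[ℂ] ℂ) (a : X) :
    Coalgebra.comul (R := ℂ) (T comulX φ a) = LinearMap.lTensor H (T comulX φ) (comulX a) := by
  obtain ⟨φ', hφ'⟩ := LinearMap.exists_extend (p := Subalgebra.toSubmodule X) φ
  have hφ : φ = φ' ∘ₗ X.val.toLinearMap := hφ'.symm
  let T' : H →ₗ[ℂ] H := (TensorProduct.rid ℂ H).toLinearMap ∘ₗ LinearMap.lTensor H φ' ∘ₗ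
    Coalgebra.comul (R := ℂ)
  have h1 : T comulX φ = T' ∘ₗ X.val.toLinearMap := by
    ext x; rw [hφ, T_val hcomulX]; rfl
  have h2 : LinearMap.lTensor H (T comulX φ) (comulX a)
      = LinearMap.lTensor H T' (Coalgebra.comul (R := ℂ) (a : H)) := by
    rw [h1, ← hcomulX, LinearMap.lTensor_comp]; rfl
  rw [h2, h1]
  change Coalgebra.comul (R := ℂ) (T' (a : H)) = _
  generalize (a : H) = x
  have h3 : LinearMap.lTensor H T' (Coalgebra.comul (R := ℂ) x) =
     LinearMap.lTensor H ((TensorProduct.rid ℂ H).toLinearMap ∘ₗ LinearMap.lTensor H φ')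
      (TensorProduct.assoc ℂ H H H
        (LinearMap.rTensor H (Coalgebra.comul (R := ℂ)) (Coalgebra.comul (R := ℂ) x))) := by
    rw [Coalgebra.coassoc_apply]
    simp only [T']
    rw [← LinearMap.comp_assoc, LinearMap.lTensor_comp]; rfl
  rw [h3]
  simp only [T', LinearMap.comp_apply]
  generalize Coalgebra.comul (R := ℂ) x = y
  induction y using TensorProduct.induction_on with
  | zero => simp
  | add x y hx hy => simp only [map_add, hx, hy]
  | tmul x y =>
    simp only [LinearMap.lTensor_tmul, LinearMap.rTensor_tmul, LinearEquiv.coe_coe,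
      TensorProduct.rid_tmul, map_smul]
    generalize Coalgebra.comul (R := ℂ) x = z
    induction z using TensorProduct.induction_on with
    | zero => simp
    | add x y hx hy => simp only [smul_add, map_add, TensorProduct.add_tmul, hx, hy]
    | tmul u v => simp

theorem counit_T (hcomulX : ∀ a : X,
      (TensorProduct.map (LinearMap.id) X.val.toLinearMap) (comulX a)
        = Coalgebra.comul (R := ℂ) (a : H)) (φ : X →ₗ[ℂ] ℂ) (a : X) :
    Coalgebra.counit (R := ℂ) (T comulX φ a) = φ a := by
  obtain ⟨n, a1, a2, ha⟩ := exists_rep (comulX a)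
  have h := Coalgebra.rTensor_counit_comul (R := ℂ) (a : H)
  rw [← hcomulX, ha] at h
  have h2 := congrArg (TensorProduct.lid ℂ H) h
  simp only [map_sum, TensorProduct.map_tmul, LinearMap.rTensor_tmul, TensorProduct.lid_tmul,
    one_smul, LinearMap.id_apply] at h2
  have h3 : a = ∑ t, (Coalgebra.counit (R := ℂ) (a1 t)) • a2 t := by
    apply Subtype.ext
    rw [← h2]
    simp
  rw [T_eq_sum _ _ _ _ ha]
  conv_rhs => rw [h3]
  simp [mul_comm]

theorem P_SP (π : Fin M → Fin M → H)
    (hΔπ : ∀ i j, Coalgebra.comul (R := ℂ) (π i j) = ∑ k, π i k ⊗ₜ[ℂ] π k j)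
    (hεπ : ∀ i j, Coalgebra.counit (R := ℂ) (π i j) = if i = j then 1 else 0) :
    (Matrix.of π) * (Matrix.of fun i j => HopfAlgebra.antipode (R := ℂ) (π i j)) = 1 := by
  ext i j
  have := HopfAlgebra.mul_antipode_lTensor_comul_apply (R := ℂ) (π i j)
  rw [hΔπ, hεπ] at this
  simp only [map_sum, LinearMap.lTensor_tmul, LinearMap.mul'_apply] at this
  rw [Matrix.mul_apply]
  simp only [Matrix.of_apply]
  rw [this, Matrix.one_apply]
  split_ifs <;> simp

theorem SP_P (π : Fin M → Fin M → H)
    (hΔπ : ∀ i j, Coalgebra.comul (R := ℂ) (π i j) = ∑ k, π i k ⊗ₜ[ℂ] π k j)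
    (hεπ : ∀ i j, Coalgebra.counit (R := ℂ) (π i j) = if i = j then 1 else 0) :
    (Matrix.of fun i j => HopfAlgebra.antipode (R := ℂ) (π i j)) * (Matrix.of π) = 1 := by
  ext i j
  have := HopfAlgebra.mul_antipode_rTensor_comul_apply (R := ℂ) (π i j)
  rw [hΔπ, hεπ] at this
  simp only [map_sum, LinearMap.rTensor_tmul, LinearMap.mul'_apply] at this
  rw [Matrix.mul_apply]
  simp only [Matrix.of_apply]
  rw [this, Matrix.one_apply]
  split_ifs <;> simp

/-- coordinates of a calculus -/
noncomputable def coords (c : CovCalc X comulX e) : (Fin M → X) ≃ₗ[X] c.Γ :=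
  LinearEquiv.ofBijective (Fintype.linearCombination X (fun i => c.d (e i))) (by
    constructor
    · intro u v h
      obtain ⟨w, _, hw⟩ := c.free (Fintype.linearCombination X (fun i => c.d (e i)) u)
      rw [hw u (by simp [Fintype.linearCombination_apply]),
        hw v (by rw [h]; simp [Fintype.linearCombination_apply])]
    · intro ω
      obtain ⟨w, hw, _⟩ := c.free ω
      exact ⟨w, by simp [Fintype.linearCombination_apply]; exact hw.symm⟩)

theorem coords_apply (c : CovCalc X comulX e) (u : Fin M → X) :
    coords c u = ∑ i, u i • c.d (e i) := by
  have : coords c u = Fintype.linearCombination X (fun i => c.d (e i)) u := rfl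
  rw [this, Fintype.linearCombination_apply]

/-- coefficient maps, complex linear -/
noncomputable def coef (c : CovCalc X comulX e) (i : Fin M) : c.Γ →ₗ[ℂ] X :=
  ((LinearMap.proj i : (Fin M → X) →ₗ[X] X) ∘ₗ (coords c).symm.toLinearMap).restrictScalars ℂ

theorem coef_sum (c : CovCalc X comulX e) (u : Fin M → X) (i : Fin M) :
    coef c i (∑ j, u j • c.d (e j)) = u i := by
  rw [← coords_apply]; simp [coef]

theorem coef_smul (c : CovCalc X comulX e) (a : X) (ω : c.Γ) (i : Fin M) :
    coef c i (a • ω) = a * coef c i ω := by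
  simp [coef]

theorem eq_sum_coef (c : CovCalc X comulX e) (ω : c.Γ) :
    ω = ∑ j, coef c j ω • c.d (e j) := by
  obtain ⟨u, rfl⟩ := (coords c).surjective ω
  rw [coords_apply]; simp only [coef_sum]

theorem coef_de (c : CovCalc X comulX e) (i j : Fin M) :
    coef c i (c.d (e j)) = if i = j then 1 else 0 := by
  have := coef_sum c (Pi.single j 1) i
  rw [Finset.sum_eq_single j] at this
  · simp only [Pi.single_eq_same, one_smul] at this
    rw [this, Pi.single_apply]
  · intro k _ hk; simp [hk]
  · simp

theorem corr_iff (c : CovCalc X comulX e) (χ : Fin M → (X →ₗ[ℂ] ℂ)) :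
    Corr c χ ↔ ∀ i a, χ i a = Coalgebra.counit (R := ℂ) ((coef c i (c.d a) : X) : H) := by
  constructor
  · intro h i a
    exact h a (fun i => coef c i (c.d a)) (eq_sum_coef c _) i
  · intro h a co hco i
    rw [h, hco, coef_sum]

/-- key formula for the partial derivatives. -/
theorem coef_P (hcomulX : ∀ a : X,
      (TensorProduct.map (LinearMap.id) X.val.toLinearMap) (comulX a)
        = Coalgebra.comul (R := ℂ) (a : H))
    (π : Fin M → Fin M → H)
    (hπ : ∀ i, comulX (e i) = ∑ j, π i j ⊗ₜ[ℂ] e j)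
    (c : CovCalc X comulX e) (χ : Fin M → (X →ₗ[ℂ] ℂ)) (hc : Corr c χ) (a : X) (j : Fin M) :
    ∑ i, ((coef c i (c.d a) : X) : H) * π i j = T comulX (χ j) a := by
  rw [corr_iff] at hc
  obtain ⟨D, hD⟩ := c.covariant
  let L : H ⊗[ℂ] c.Γ →ₗ[ℂ] H := (TensorProduct.rid ℂ H).toLinearMap ∘ₗ
    LinearMap.lTensor H (epsX X ∘ₗ coef c j)
  obtain ⟨n, a1, a2, ha⟩ := exists_rep (comulX a)
  have h1 := hD 1 a (Fin 1) (Fin n) inferInstance inferInstance (fun _ => 1) (fun _ => 1) a1 a2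
    (by simp [comulX_one hcomulX]) ha
  have h2 : L (D (c.d a)) = T comulX (χ j) a := by
    simp only [one_smul] at h1
    rw [h1, T_eq_sum _ _ _ _ ha]
    simp [L, hc]
  rw [← h2]
  conv_rhs => rw [eq_sum_coef c (c.d a)]
  simp only [map_sum]
  refine Finset.sum_congr rfl fun i _ => ?_
  obtain ⟨m, b1, b2, hb⟩ := exists_rep (comulX (coef c i (c.d a)))
  rw [hD _ _ _ _ inferInstance inferInstance b1 b2 _ _ hb (hπ i)]
  rw [← T_eps hcomulX (coef c i (c.d a)), T_eq_sum _ _ _ _ hb, Finset.sum_mul]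
  simp only [map_sum]
  refine Finset.sum_congr rfl fun t _ => ?_
  simp only [L, LinearMap.comp_apply, LinearMap.lTensor_tmul, LinearEquiv.coe_coe,
    TensorProduct.rid_tmul, coef_smul, coef_de]
  rw [Finset.sum_eq_single j]
  · simp
  · intro k _ hk; simp [hk.symm]
  · simp

theorem coef_eq (hcomulX : ∀ a : X,
      (TensorProduct.map (LinearMap.id) X.val.toLinearMap) (comulX a)
        = Coalgebra.comul (R := ℂ) (a : H))
    (π : Fin M → Fin M → H)
    (hπ : ∀ i, comulX (e i) = ∑ j, π i j ⊗ₜ[ℂ] e j)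
    (hΔπ : ∀ i j, Coalgebra.comul (R := ℂ) (π i j) = ∑ k, π i k ⊗ₜ[ℂ] π k j)
    (hεπ : ∀ i j, Coalgebra.counit (R := ℂ) (π i j) = if i = j then 1 else 0)
    (c : CovCalc X comulX e) (χ : Fin M → (X →ₗ[ℂ] ℂ)) (hc : Corr c χ) (a : X) (i : Fin M) :
    ((coef c i (c.d a) : X) : H) =
      ∑ j, T comulX (χ j) a * HopfAlgebra.antipode (R := ℂ) (π j i) := by
  have h : Matrix.vecMul (fun i => ((coef c i (c.d a) : X) : H)) (Matrix.of π)
      = fun j => T comulX (χ j) a := by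
    ext j; rw [← coef_P hcomulX π hπ c χ hc a j]; simp [Matrix.vecMul, dotProduct]
  have h2 := congrArg (fun v => Matrix.vecMul v
    (Matrix.of fun i j => HopfAlgebra.antipode (R := ℂ) (π i j))) h
  simp only [Matrix.vecMul_vecMul, P_SP π hΔπ hεπ, Matrix.vecMul_one] at h2
  have h3 := congrFun h2 i
  rw [h3]; simp [Matrix.vecMul, dotProduct]

theorem d_one (c : CovCalc X comulX e) : c.d 1 = 0 := by
  have := c.leibniz 1 1
  simpa using this

theorem part3 (hcomulX : ∀ a : X,
      (TensorProduct.map (LinearMap.id) X.val.toLinearMap) (comulX a)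
        = Coalgebra.comul (R := ℂ) (a : H))
    (π : Fin M → Fin M → H)
    (hπ : ∀ i, comulX (e i) = ∑ j, π i j ⊗ₜ[ℂ] e j)
    (hΔπ : ∀ i j, Coalgebra.comul (R := ℂ) (π i j) = ∑ k, π i k ⊗ₜ[ℂ] π k j)
    (hεπ : ∀ i j, Coalgebra.counit (R := ℂ) (π i j) = if i = j then 1 else 0)
    (c c' : CovCalc X comulX e) (χ : Fin M → (X →ₗ[ℂ] ℂ)) (hc : Corr c χ) (hc' : Corr c' χ) :
    c.Iso c' := by
  have hco : ∀ i a, coef c i (c.d a) = coef c' i (c'.d a) := by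
    intro i a; apply Subtype.ext
    rw [coef_eq hcomulX π hπ hΔπ hεπ c χ hc, coef_eq hcomulX π hπ hΔπ hεπ c' χ hc']
  let ψ : c.Γ ≃ₗ[X] c'.Γ := (coords c).symm.trans (coords c')
  have hd : ∀ a, ψ (c.d a) = c'.d a := by
    intro a
    rw [eq_sum_coef c' (c'.d a), ← coords_apply c' (fun j => coef c' j (c'.d a))]
    simp only [← hco]
    rfl
  refine ⟨ψ.restrictScalars ℂ, hd, fun a x => ψ.map_smul a x, ?_⟩
  intro b x
  change ψ (op b • x) = op b • ψ x
  have hx : x ∈ Submodule.span ℂ {x : c.Γ | ∃ a b : X, x = a • c.d b} := by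
    rw [c.spanning]; trivial
  induction hx using Submodule.span_induction with
  | mem x hx =>
    obtain ⟨a, y, rfl⟩ := hx
    have h1 : op b • c.d y = c.d (y * b) - y • c.d b := by rw [c.leibniz]; abel
    have h2 : op b • c'.d y = c'.d (y * b) - y • c'.d b := by rw [c'.leibniz]; abel
    rw [← smul_comm a (op b) (c.d y), h1, map_smul, map_sub, map_smul, map_smul, hd, hd, hd,
      ← smul_comm a (op b) (c'.d y), h2]
  | zero => simp
  | add x y _ _ hx hy => simp only [smul_add, map_add, hx, hy]
  | smul t x _ hx =>
    have e1 : t • x = (algebraMap ℂ X t) • x := (algebraMap_smul X t x).symm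
    rw [e1, ← smul_comm _ (op b) x, map_smul, hx, map_smul, ← smul_comm _ (op b) (ψ x)]

/-- The functionals `F^k_i(b) = χ_i(e^k b) - ε(e^k) χ_i(b)`. -/
noncomputable def F (e : Fin M → X) (χ : Fin M → (X →ₗ[ℂ] ℂ)) (k i : Fin M) : X →ₗ[ℂ] ℂ :=
  (χ i) ∘ₗ LinearMap.mulLeft ℂ (e k) - (epsX X (e k)) • χ i

theorem F_apply (χ : Fin M → (X →ₗ[ℂ] ℂ)) (k i : Fin M) (b : X) :
    F e χ k i b = χ i (e k * b) - epsX X (e k) * χ i b := by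
  simp [F]

theorem eps_mul (a b : X) : epsX X (a * b) = epsX X a * epsX X b := by
  simp [epsX]

theorem eps_one : epsX X 1 = 1 := by
  simp [epsX]

/-- twisted Leibniz rule for the functionals -/
def Star (e : Fin M → X) (χ : Fin M → (X →ₗ[ℂ] ℂ)) : Prop :=
  ∀ (i : Fin M) (a b : X), χ i (a * b) = epsX X a * χ i b + ∑ k, χ k a * F e χ k i b

theorem F_mul (χ : Fin M → (X →ₗ[ℂ] ℂ)) (hs : Star e χ) (k i : Fin M) (a b : X) :
    F e χ k i (a * b) = ∑ l, F e χ k l a * F e χ l i b := by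
  rw [F_apply, ← mul_assoc, hs i (e k * a) b, hs i a b, eps_mul]
  simp only [F_apply χ k _ a, sub_mul, Finset.sum_sub_distrib]
  rw [mul_add, Finset.mul_sum]
  simp only [mul_assoc]
  ring

theorem F_one (χ : Fin M → (X →ₗ[ℂ] ℂ)) (h1 : ∀ i j, χ i (e j) = if i = j then 1 else 0)
    (h0 : ∀ i, χ i 1 = 0) (k i : Fin M) : F e χ k i 1 = if k = i then 1 else 0 := by
  rw [F_apply, mul_one, h1, h0]; simp [eq_comm]

theorem mem_span (χ : Fin M → (X →ₗ[ℂ] ℂ)) (f : X →ₗ[ℂ] ℂ)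
    (hf : f ∈ Submodule.span ℂ
      ({(Coalgebra.counit (R := ℂ)).comp X.val.toLinearMap} ∪ Set.range χ)) :
    ∃ (α : ℂ) (β : Fin M → ℂ), f = α • epsX X + ∑ i, β i • χ i := by
  rw [Submodule.span_union, Submodule.mem_sup] at hf
  obtain ⟨y, hy, z, hz, rfl⟩ := hf
  obtain ⟨α, rfl⟩ := Submodule.mem_span_singleton.1 hy
  obtain ⟨β, rfl⟩ := (Submodule.mem_span_range_iff_exists_fun ℂ).1 hz
  exact ⟨α, β, rfl⟩

theorem coideal_of_star (χ : Fin M → (X →ₗ[ℂ] ℂ)) (hs : Star e χ) (f : X →ₗ[ℂ] ℂ)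
    (hf : f ∈ Submodule.span ℂ
      ({(Coalgebra.counit (R := ℂ)).comp X.val.toLinearMap} ∪ Set.range χ)) :
    ∃ (n : ℕ) (g h : Fin n → (X →ₗ[ℂ] ℂ)),
      (∀ k, g k ∈ Submodule.span ℂ
        ({(Coalgebra.counit (R := ℂ)).comp X.val.toLinearMap} ∪ Set.range χ)) ∧
      (∀ k, InRestrictedDual (h k)) ∧
      (∀ a b : X, f (a * b) = ∑ k, g k a * h k b) := by
  obtain ⟨α, β, hαβ⟩ := mem_span χ f hf
  let g : Fin (M + 1) → (X →ₗ[ℂ] ℂ) := Fin.cons (epsX X) χ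
  let h : Fin (M + 1) → (X →ₗ[ℂ] ℂ) := Fin.cons f (fun k => ∑ i, β i • F e χ k i)
  have hgh : ∀ a b : X, f (a * b) = ∑ k, g k a * h k b := by
    intro a b
    rw [Fin.sum_univ_succ]
    simp only [g, h, Fin.cons_zero, Fin.cons_succ]
    rw [hαβ]
    simp only [LinearMap.add_apply, LinearMap.smul_apply, LinearMap.sum_apply, smul_eq_mul,
      eps_mul, hs _ a b, mul_add, Finset.sum_add_distrib, Finset.mul_sum]
    rw [Finset.sum_comm (f := fun i k => β i * (χ k a * F e χ k i b)), ← add_assoc]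
    congr 1
    · congr 1
      · ring
      · refine Finset.sum_congr rfl fun i _ => ?_
        ring
    · refine Finset.sum_congr rfl fun i _ => Finset.sum_congr rfl fun j _ => ?_
      ring
  refine ⟨M + 1, g, h, ?_, ?_, hgh⟩
  · intro k
    apply Submodule.subset_span
    refine Fin.cases ?_ (fun k => ?_) k
    · left; rfl
    · right; exact ⟨k, rfl⟩
  · intro k
    refine Fin.cases ?_ (fun k => ?_) k
    · exact ⟨M + 1, g, h, hgh⟩
    · refine ⟨M, fun l => F e χ k l, fun l => ∑ i, β i • F e χ l i, ?_⟩
      intro a b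
      simp only [h, Fin.cons_succ, LinearMap.sum_apply, LinearMap.smul_apply, smul_eq_mul,
        F_mul χ hs, Finset.mul_sum]
      rw [Finset.sum_comm]
      refine Finset.sum_congr rfl fun i _ => Finset.sum_congr rfl fun j _ => ?_
      ring

theorem star_of_corr (c : CovCalc X comulX e) (χ : Fin M → (X →ₗ[ℂ] ℂ)) (hc : Corr c χ) :
    Star e χ := by
  rw [corr_iff] at hc
  have hc' : ∀ i a, χ i a = epsX X (coef c i (c.d a)) := hc
  intro i a b
  have h1 : ∀ k, F e χ k i b = epsX X (coef c i (op b • c.d (e k))) := by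
    intro k
    rw [F_apply, hc', hc', c.leibniz, map_add, map_add, coef_smul, eps_mul]
    ring
  rw [hc', c.leibniz, map_add, map_add, coef_smul, eps_mul, ← hc']
  congr 1
  conv_lhs => rw [eq_sum_coef c (c.d a)]
  rw [Finset.smul_sum, map_sum, map_sum]
  refine Finset.sum_congr rfl fun k _ => ?_
  rw [← smul_comm _ (op b) (c.d (e k)), coef_smul, eps_mul, ← hc', h1]

theorem part1 (hcomulX : ∀ a : X,
      (TensorProduct.map (LinearMap.id) X.val.toLinearMap) (comulX a)
        = Coalgebra.comul (R := ℂ) (a : H))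
    (π : Fin M → Fin M → H)
    (hπ : ∀ i, comulX (e i) = ∑ j, π i j ⊗ₜ[ℂ] e j)
    (hΔπ : ∀ i j, Coalgebra.comul (R := ℂ) (π i j) = ∑ k, π i k ⊗ₜ[ℂ] π k j)
    (hεπ : ∀ i j, Coalgebra.counit (R := ℂ) (π i j) = if i = j then 1 else 0)
    (c : CovCalc X comulX e) : ∃ χ, Corr c χ ∧ GoodChi X comulX e π χ := by
  let χ : Fin M → (X →ₗ[ℂ] ℂ) := fun i => epsX X ∘ₗ coef c i ∘ₗ c.d
  have hc : Corr c χ := (corr_iff c χ).2 fun i a => rfl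
  refine ⟨χ, hc, ?_, ?_, ?_, ?_⟩
  · intro i j
    simp only [χ, LinearMap.comp_apply, coef_de]
    split_ifs
    · simp
    · simp
  · intro i
    simp [χ, d_one]
  · exact coideal_of_star χ (star_of_corr c χ hc)
  · intro a i ι _ a1 a2 ha
    have h := coef_eq hcomulX π hπ hΔπ hεπ c χ hc a i
    have h2 : (∑ t, ∑ j, χ j (a2 t) • (a1 t * HopfAlgebra.antipode (R := ℂ) (π j i)))
        = ((coef c i (c.d a) : X) : H) := by
      rw [h, Finset.sum_comm]
      simp only [T_eq_sum _ _ _ _ ha, Finset.sum_mul, smul_mul_assoc]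
    rw [h2]
    exact (coef c i (c.d a)).2

theorem star_of_good (π : Fin M → Fin M → H) (χ : Fin M → (X →ₗ[ℂ] ℂ))
    (hg : GoodChi X comulX e π χ) : Star e χ := by
  obtain ⟨h1, h0, hco, -⟩ := hg
  intro i a b
  obtain ⟨n, g, h, hgs, -, hgh⟩ := hco (χ i) (Submodule.subset_span (Or.inr ⟨i, rfl⟩))
  choose α β hαβ using fun t => mem_span χ (g t) (hgs t)
  have key : ∀ a b : X, χ i (a * b) = epsX X a * (∑ t, α t * h t b)
      + ∑ k, χ k a * (∑ t, β t k * h t b) := by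
    intro a b
    rw [hgh]
    have : ∀ t, g t a = α t * epsX X a + ∑ k, β t k * χ k a := by
      intro t; rw [hαβ t]
      simp only [LinearMap.add_apply, LinearMap.smul_apply, LinearMap.sum_apply, smul_eq_mul]
    simp only [this, add_mul, Finset.sum_add_distrib, Finset.sum_mul, Finset.mul_sum]
    rw [Finset.sum_comm (f := fun t k => β t k * χ k a * h t b)]
    congr 1
    · refine Finset.sum_congr rfl fun i _ => ?_
      ring
    · refine Finset.sum_congr rfl fun i _ => Finset.sum_congr rfl fun j _ => ?_
      ring
  have hG : ∀ b, χ i b = ∑ t, α t * h t b := by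
    intro b
    have := key 1 b
    simpa only [one_mul, eps_one, h0, zero_mul, Finset.sum_const_zero, add_zero] using this
  have hK : ∀ k b, F e χ k i b = ∑ t, β t k * h t b := by
    intro k b
    rw [F_apply, key, hG b, add_sub_cancel_left]
    simp [h1]
  rw [key, hG b]
  simp only [hK]

/-- vector `a₍₁₎ χ_j(a₍₂₎)` -/
noncomputable def chiHat (comulX : X →ₗ[ℂ] H ⊗[ℂ] X) (χ : Fin M → (X →ₗ[ℂ] ℂ)) (a : X) :
    Fin M → H := fun j => T comulX (χ j) a

/-- matrix `b₍₁₎ F^k_l(b₍₂₎)` -/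
noncomputable def FHat (comulX : X →ₗ[ℂ] H ⊗[ℂ] X) (e : Fin M → X)
    (χ : Fin M → (X →ₗ[ℂ] ℂ)) (b : X) :
    Matrix (Fin M) (Fin M) H := Matrix.of fun k l => T comulX (F e χ k l) b

/-- antipode of the matrix -/
noncomputable def SP (π : Fin M → Fin M → H) : Matrix (Fin M) (Fin M) H :=
  Matrix.of fun i j => HopfAlgebra.antipode (R := ℂ) (π i j)

/-- the derivations -/
noncomputable def del (comulX : X →ₗ[ℂ] H ⊗[ℂ] X) (χ : Fin M → (X →ₗ[ℂ] ℂ))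
    (π : Fin M → Fin M → H) (j : Fin M) : X →ₗ[ℂ] H :=
  ∑ l, LinearMap.mulRight ℂ (SP π l j) ∘ₗ T comulX (χ l)

theorem del_eq (χ : Fin M → (X →ₗ[ℂ] ℂ)) (π : Fin M → Fin M → H) (a : X) :
    (fun j => del comulX χ π j a) = Matrix.vecMul (chiHat comulX χ a) (SP π) := by
  ext j
  simp [del, Matrix.vecMul, dotProduct, chiHat]

theorem chiHat_mul (hcomulX : ∀ a : X,
      (TensorProduct.map (LinearMap.id) X.val.toLinearMap) (comulX a)
        = Coalgebra.comul (R := ℂ) (a : H))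
    (χ : Fin M → (X →ₗ[ℂ] ℂ)) (hs : Star e χ) (a b : X) :
    chiHat comulX χ (a * b) = (a : H) • chiHat comulX χ b
      + Matrix.vecMul (chiHat comulX χ a) (FHat comulX e χ b) := by
  ext j
  have := T_mul (κ := Option (Fin M)) hcomulX (χ j)
    (fun o => o.elim (epsX X) χ) (fun o => o.elim (χ j) (fun k => F e χ k j))
    (by intro a b; rw [Fintype.sum_option]; exact hs j a b) a b
  rw [Fintype.sum_option] at this
  simp only [Option.elim] at this
  rw [T_eps hcomulX] at this
  simp only [chiHat, this, Pi.add_apply, Pi.smul_apply, smul_eq_mul, Matrix.vecMul, dotProduct,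
    FHat, Matrix.of_apply]

theorem FHat_mul (hcomulX : ∀ a : X,
      (TensorProduct.map (LinearMap.id) X.val.toLinearMap) (comulX a)
        = Coalgebra.comul (R := ℂ) (a : H))
    (χ : Fin M → (X →ₗ[ℂ] ℂ)) (hs : Star e χ) (a b : X) :
    FHat comulX e χ (a * b) = FHat comulX e χ a * FHat comulX e χ b := by
  ext k i
  simp only [FHat, Matrix.mul_apply, Matrix.of_apply]
  exact T_mul hcomulX _ _ _ (F_mul χ hs k i) a b

theorem FHat_one (hcomulX : ∀ a : X,
      (TensorProduct.map (LinearMap.id) X.val.toLinearMap) (comulX a)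
        = Coalgebra.comul (R := ℂ) (a : H))
    (χ : Fin M → (X →ₗ[ℂ] ℂ)) (h1 : ∀ i j, χ i (e j) = if i = j then 1 else 0)
    (h0 : ∀ i, χ i 1 = 0) : FHat comulX e χ 1 = 1 := by
  ext k i
  simp only [FHat, Matrix.of_apply]
  rw [T_one hcomulX, F_one χ h1 h0, Matrix.one_apply]
  split_ifs <;> simp

/-- the right action matrix over `H` -/
noncomputable def fH (comulX : X →ₗ[ℂ] H ⊗[ℂ] X) (e : Fin M → X)
    (χ : Fin M → (X →ₗ[ℂ] ℂ)) (π : Fin M → Fin M → H) (b : X) : Matrix (Fin M) (Fin M) H :=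
  Matrix.of π * FHat comulX e χ b * SP π

theorem del_mul (hcomulX : ∀ a : X,
      (TensorProduct.map (LinearMap.id) X.val.toLinearMap) (comulX a)
        = Coalgebra.comul (R := ℂ) (a : H))
    (π : Fin M → Fin M → H)
    (hSP : SP π * Matrix.of π = 1)
    (χ : Fin M → (X →ₗ[ℂ] ℂ)) (hs : Star e χ) (a b : X) :
    (fun j => del comulX χ π j (a * b)) = (a : H) • (fun j => del comulX χ π j b)
      + Matrix.vecMul (fun j => del comulX χ π j a) (fH comulX e χ π b) := by
  simp only [del_eq, fH]
  rw [chiHat_mul hcomulX χ hs, Matrix.add_vecMul, Matrix.smul_vecMul, Matrix.vecMul_vecMul,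
    Matrix.vecMul_vecMul]
  congr 2
  rw [← mul_assoc, ← mul_assoc, hSP, one_mul]

theorem del_e (π : Fin M → Fin M → H)
    (hπ : ∀ i, comulX (e i) = ∑ j, π i j ⊗ₜ[ℂ] e j)
    (hPS : Matrix.of π * SP π = 1)
    (χ : Fin M → (X →ₗ[ℂ] ℂ)) (h1 : ∀ i j, χ i (e j) = if i = j then 1 else 0)
    (k j : Fin M) : del comulX χ π j (e k) = if k = j then 1 else 0 := by
  have : chiHat comulX χ (e k) = Matrix.of π k := by
    ext j
    simp only [chiHat]
    rw [T_eq_sum _ _ _ _ (hπ k)]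
    simp [h1]
  have h2 := congrFun (del_eq (comulX := comulX) χ π (e k)) j
  rw [h2, this]
  have h3 := congrFun (congrFun hPS k) j
  rw [Matrix.one_apply] at h3
  rw [← h3]; rfl

theorem del_mem (π : Fin M → Fin M → H) (χ : Fin M → (X →ₗ[ℂ] ℂ))
    (hg : GoodChi X comulX e π χ) (a : X) (i : Fin M) : del comulX χ π i a ∈ X := by
  obtain ⟨n, a1, a2, ha⟩ := exists_rep (comulX a)
  have := hg.2.2.2 a i (Fin n) inferInstance a1 a2 ha
  have h2 : (∑ t, ∑ j, χ j (a2 t) • (a1 t * HopfAlgebra.antipode (R := ℂ) (π j i)))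
        = del comulX χ π i a := by
    rw [Finset.sum_comm]
    simp [del, SP, T_eq_sum _ _ _ _ ha]
  rwa [h2] at this

theorem fH_apply (hcomulX : ∀ a : X,
      (TensorProduct.map (LinearMap.id) X.val.toLinearMap) (comulX a)
        = Coalgebra.comul (R := ℂ) (a : H))
    (π : Fin M → Fin M → H)
    (hπ : ∀ i, comulX (e i) = ∑ j, π i j ⊗ₜ[ℂ] e j)
    (hPS : Matrix.of π * SP π = 1) (hSP : SP π * Matrix.of π = 1)
    (χ : Fin M → (X →ₗ[ℂ] ℂ)) (hs : Star e χ)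
    (h1 : ∀ i j, χ i (e j) = if i = j then 1 else 0) (b : X) (k j : Fin M) :
    fH comulX e χ π b k j = del comulX χ π j (e k * b) - (e k : H) * del comulX χ π j b := by
  have := congrFun (del_mul hcomulX π hSP χ hs (e k) b) j
  simp only [del_e π hπ hPS χ h1, Pi.add_apply, Pi.smul_apply, smul_eq_mul] at this
  rw [this]
  simp [Matrix.vecMul, dotProduct]

/-- covariance of the derivations -/
theorem del_cov (hcomulX : ∀ a : X,
      (TensorProduct.map (LinearMap.id) X.val.toLinearMap) (comulX a)
        = Coalgebra.comul (R := ℂ) (a : H))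
    (π : Fin M → Fin M → H)
    (hΔπ : ∀ i j, Coalgebra.comul (R := ℂ) (π i j) = ∑ k, π i k ⊗ₜ[ℂ] π k j)
    (hPS : Matrix.of π * SP π = 1) (hSP : SP π * Matrix.of π = 1)
    (χ : Fin M → (X →ₗ[ℂ] ℂ)) (b : X) (j : Fin M) :
    ∑ i, Coalgebra.comul (R := ℂ) (del comulX χ π i b) * (π i j ⊗ₜ[ℂ] (1 : H)) =
      LinearMap.lTensor H (del comulX χ π j) (comulX b) := by
  have hT : ∀ l, T comulX (χ l) b = ∑ m, del comulX χ π m b * π m l := by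
    intro l
    have h : Matrix.vecMul (fun m => del comulX χ π m b) (Matrix.of π) = chiHat comulX χ b := by
      rw [del_eq, Matrix.vecMul_vecMul, hSP, Matrix.vecMul_one]
    have := congrFun h l
    rw [chiHat] at this
    rw [← this]; rfl
  have hR : LinearMap.lTensor H (del comulX χ π j) (comulX b) =
      ∑ l, Coalgebra.comul (R := ℂ) (T comulX (χ l) b) * ((1 : H) ⊗ₜ[ℂ] SP π l j) := by
    simp only [comul_T hcomulX]
    obtain ⟨n, a1, a2, ha⟩ := exists_rep (comulX b)
    rw [ha]
    simp only [map_sum, LinearMap.lTensor_tmul, del, LinearMap.sum_apply, LinearMap.comp_apply,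
      LinearMap.mulRight_apply, Finset.sum_mul, Algebra.TensorProduct.tmul_mul_tmul, mul_one,
      TensorProduct.tmul_sum]
    rw [Finset.sum_comm]
  rw [hR]
  have hP : ∀ i, ∑ l, π i l * SP π l j = if i = j then 1 else 0 := by
    intro i
    have h3 := congrFun (congrFun hPS i) j
    rw [Matrix.one_apply] at h3
    rw [← h3]; rfl
  have hterm : ∀ m, ∑ l, Coalgebra.comul (R := ℂ) (π m l) * ((1 : H) ⊗ₜ[ℂ] SP π l j)
      = π m j ⊗ₜ[ℂ] (1 : H) := by
    intro m
    simp only [hΔπ, Finset.sum_mul, Algebra.TensorProduct.tmul_mul_tmul, mul_one]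
    rw [Finset.sum_comm]
    simp only [← TensorProduct.tmul_sum, hP]
    rw [Finset.sum_eq_single j]
    · simp
    · intro k _ hk; simp [hk]
    · simp
  simp only [hT, map_sum, Bialgebra.comul_mul, Finset.sum_mul]
  rw [Finset.sum_comm]
  refine Finset.sum_congr rfl fun m _ => ?_
  simp only [mul_assoc]
  rw [← Finset.mul_sum, hterm]

theorem exists_calc (dd : X →ₗ[ℂ] (Fin M → X)) (fM : X → Matrix (Fin M) (Fin M) X)
    (fmul : ∀ a b, fM (a * b) = fM a * fM b) (fone : fM 1 = 1)
    (fadd : ∀ a b, fM (a + b) = fM a + fM b) (fzero : fM 0 = 0)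
    (ddsum : ∀ v : Fin M → X, ∑ i, v i • dd (e i) = v)
    (leib : ∀ a b : X, dd (a * b) = a • dd b + Matrix.vecMul (dd a) (fM b))
    (D : (Fin M → X) →ₗ[ℂ] H ⊗[ℂ] (Fin M → X))
    (hcov : ∀ (a b : X) (ι κ : Type) (_ : Fintype ι) (_ : Fintype κ)
      (a1 : ι → H) (a2 : ι → X) (b1 : κ → H) (b2 : κ → X),
      comulX a = ∑ t, a1 t ⊗ₜ[ℂ] a2 t → comulX b = ∑ s, b1 s ⊗ₜ[ℂ] b2 s →
      D (a • dd b) = ∑ t, ∑ s, (a1 t * b1 s) ⊗ₜ[ℂ] (a2 t • dd (b2 s)))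
    (χ : Fin M → (X →ₗ[ℂ] ℂ))
    (hχ : ∀ i a, χ i a = Coalgebra.counit (R := ℂ) ((dd a i : X) : H)) :
    ∃ c : CovCalc X comulX e, Corr c χ := by
  let mR : Module Xᵐᵒᵖ (Fin M → X) :=
    { smul := fun b v => Matrix.vecMul v (fM b.unop)
      one_smul := fun v => by
        change Matrix.vecMul v (fM 1) = v
        rw [fone, Matrix.vecMul_one]
      mul_smul := fun a b v => by
        change Matrix.vecMul v (fM (b.unop * a.unop)) =
          Matrix.vecMul (Matrix.vecMul v (fM b.unop)) (fM a.unop)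
        rw [fmul, Matrix.vecMul_vecMul]
      smul_zero := fun a => Matrix.zero_vecMul _
      smul_add := fun a u v => Matrix.add_vecMul _ _ _
      add_smul := fun a b v => by
        change Matrix.vecMul v (fM (a.unop + b.unop)) =
          Matrix.vecMul v (fM a.unop) + Matrix.vecMul v (fM b.unop)
        rw [fadd, Matrix.vecMul_add]
      zero_smul := fun v => by
        change Matrix.vecMul v (fM 0) = 0
        rw [fzero, Matrix.vecMul_zero] }
  have hcomm : @SMulCommClass X Xᵐᵒᵖ (Fin M → X) _ mR.toSMul :=
    @SMulCommClass.mk X Xᵐᵒᵖ (Fin M → X) _ mR.toSMul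
      (fun a b v => (Matrix.smul_vecMul a v (fM b.unop)).symm)
  refine ⟨@CovCalc.mk H _ _ X comulX M e (Fin M → X) _ _ _ mR hcomm _ dd leib ?_ ?_ ⟨D, hcov⟩, ?_⟩
  · rw [eq_top_iff]
    intro v _
    rw [← ddsum v]
    exact Submodule.sum_mem _ fun i _ => Submodule.subset_span ⟨v i, e i, rfl⟩
  · exact fun ω => ⟨ω, (ddsum ω).symm, fun v hv => by
      rw [hv]; exact (ddsum v).symm⟩
  · intro a co hco i
    have h2 : dd a = co := by
      have : dd a = ∑ i, co i • dd (e i) := hco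
      rw [this, ddsum]
    rw [← h2, hχ]

theorem part2 (hcomulX : ∀ a : X,
      (TensorProduct.map (LinearMap.id) X.val.toLinearMap) (comulX a)
        = Coalgebra.comul (R := ℂ) (a : H))
    (π : Fin M → Fin M → H)
    (hπ : ∀ i, comulX (e i) = ∑ j, π i j ⊗ₜ[ℂ] e j)
    (hΔπ : ∀ i j, Coalgebra.comul (R := ℂ) (π i j) = ∑ k, π i k ⊗ₜ[ℂ] π k j)
    (hεπ : ∀ i j, Coalgebra.counit (R := ℂ) (π i j) = if i = j then 1 else 0)
    (χ : Fin M → (X →ₗ[ℂ] ℂ)) (hg : GoodChi X comulX e π χ) :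
    ∃ c : CovCalc X comulX e, Corr c χ := by
  have hs := star_of_good π χ hg
  have h1 := hg.1
  have h0 := hg.2.1
  have hPS : Matrix.of π * SP π = 1 := P_SP π hΔπ hεπ
  have hSP : SP π * Matrix.of π = 1 := SP_P π hΔπ hεπ
  let dX : Fin M → X →ₗ[ℂ] X := fun i =>
    LinearMap.codRestrict (Subalgebra.toSubmodule X) (del comulX χ π i) (del_mem π χ hg · i)
  have hdX : ∀ i a, ((dX i a : X) : H) = del comulX χ π i a := fun i a => rfl
  let dd : X →ₗ[ℂ] (Fin M → X) := LinearMap.pi dX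
  have hdd : ∀ a i, dd a i = dX i a := fun a i => rfl
  let fM : X → Matrix (Fin M) (Fin M) X := fun b => Matrix.of fun k j =>
    dX j (e k * b) - e k * dX j b
  have hfM : ∀ b, (fM b).map (fun x : X => (x : H)) = fH comulX e χ π b := by
    intro b; ext k j
    rw [fH_apply hcomulX π hπ hPS hSP χ hs h1]
    simp [fM, hdX]
  have minj : Function.Injective
      (fun A : Matrix (Fin M) (Fin M) X => A.map (fun x : X => (x : H))) :=
    Matrix.map_injective Subtype.val_injective
  have mmul : ∀ A B : Matrix (Fin M) (Fin M) X, (A * B).map (fun x : X => (x : H)) =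
      A.map (fun x : X => (x : H)) * B.map (fun x : X => (x : H)) := by
    intro A B; exact Matrix.map_mul (f := X.val.toRingHom)
  have fmul : ∀ a b, fM (a * b) = fM a * fM b := by
    intro a b
    apply minj
    simp only [mmul, hfM, fH, FHat_mul hcomulX χ hs]
    calc _ = Matrix.of π * FHat comulX e χ a * 1 * FHat comulX e χ b * SP π := by
          simp only [mul_one, mul_assoc]
      _ = _ := by rw [← hSP]; simp only [mul_assoc]
  have fone : fM 1 = 1 := by
    apply minj
    simp only [hfM, fH, FHat_one hcomulX χ h1 h0, mul_one, hPS]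
    ext i j
    simp only [Matrix.map_apply, Matrix.one_apply]
    split_ifs <;> simp
  have fadd : ∀ a b, fM (a + b) = fM a + fM b := by
    intro a b; ext i j
    simp only [fM, Matrix.of_apply, Matrix.add_apply, mul_add, map_add]
    push_cast; abel
  have fzero : fM 0 = 0 := by
    ext i j
    simp [fM]
  have dde : ∀ k, dd (e k) = Pi.single k 1 := by
    intro k; ext j
    rw [hdd, hdX, del_e π hπ hPS χ h1, Pi.single_apply]
    by_cases h : k = j
    · simp [h]
    · simp [h, Ne.symm h]
  have ddsum : ∀ v : Fin M → X, ∑ i, v i • dd (e i) = v := by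
    intro v
    simp only [dde]
    ext j
    simp [Finset.sum_apply, Pi.single_apply]
  have leib : ∀ a b : X, dd (a * b) = a • dd b + Matrix.vecMul (dd a) (fM b) := by
    intro a b
    ext j
    have := congrFun (del_mul hcomulX π hSP χ hs a b) j
    rw [hdd, hdX, this]
    simp only [Pi.add_apply, Pi.smul_apply, smul_eq_mul, Matrix.vecMul, dotProduct, hdd]
    push_cast
    simp only [hdX, ← hfM, Matrix.map_apply]
  have cov : ∀ (b : X) (j : Fin M), ∑ i, comulX (dX i b) * (π i j ⊗ₜ[ℂ] (1 : X)) =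
      LinearMap.lTensor H (dX j) (comulX b) := by
    intro b j
    apply iX_inj
    have e1 : TensorProduct.map (LinearMap.id : H →ₗ[ℂ] H) X.val.toLinearMap
        (LinearMap.lTensor H (dX j) (comulX b)) = LinearMap.lTensor H (del comulX χ π j) (comulX b)
        := by
      obtain ⟨n, a1, a2, ha⟩ := exists_rep (comulX b)
      rw [ha]
      simp [hdX]
    rw [e1, ← del_cov hcomulX π hΔπ hPS hSP χ, map_sum]
    refine Finset.sum_congr rfl fun i _ => ?_
    have h2 : ∀ z : H ⊗[ℂ] X, TensorProduct.map (LinearMap.id : H →ₗ[ℂ] H) X.val.toLinearMap z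
      = Algebra.TensorProduct.map (AlgHom.id ℂ H) X.val z := fun _ => rfl
    rw [h2, map_mul, ← h2, hcomulX, hdX]
    simp
  obtain ⟨D, hD0⟩ : ∃ D : (Fin M → X) →ₗ[ℂ] H ⊗[ℂ] (Fin M → X), D =
    ∑ j, LinearMap.lTensor H (LinearMap.single ℂ (fun _ : Fin M => X) j) ∘ₗ
      ∑ i, LinearMap.mulRight ℂ (π i j ⊗ₜ[ℂ] (1 : X)) ∘ₗ comulX ∘ₗ LinearMap.proj i := ⟨_, rfl⟩
  have hcov : ∀ (a b : X) (ι κ : Type) (_ : Fintype ι) (_ : Fintype κ)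
      (a1 : ι → H) (a2 : ι → X) (b1 : κ → H) (b2 : κ → X),
      comulX a = ∑ t, a1 t ⊗ₜ[ℂ] a2 t → comulX b = ∑ s, b1 s ⊗ₜ[ℂ] b2 s →
      D (a • dd b) = ∑ t, ∑ s, (a1 t * b1 s) ⊗ₜ[ℂ] (a2 t • dd (b2 s)) := by
    intro a b ι κ _ _ a1 a2 b1 b2 ha hb
    have hD : D (a • dd b) = ∑ j, LinearMap.lTensor H
        (LinearMap.single ℂ (fun _ : Fin M => X) j)
        (comulX a * LinearMap.lTensor H (dX j) (comulX b)) := by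
      simp only [hD0, LinearMap.sum_apply, LinearMap.comp_apply, LinearMap.mulRight_apply,
        LinearMap.proj_apply, Pi.smul_apply, smul_eq_mul, hdd, comulX_mul hcomulX, mul_assoc,
        ← Finset.mul_sum, cov]
    rw [hD, ha, hb]
    simp only [map_sum, LinearMap.lTensor_tmul, Finset.sum_mul_sum,
      Algebra.TensorProduct.tmul_mul_tmul]
    rw [Finset.sum_comm]
    refine Finset.sum_congr rfl fun t _ => ?_
    rw [Finset.sum_comm]
    refine Finset.sum_congr rfl fun s _ => ?_
    rw [← TensorProduct.tmul_sum]
    congr 1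
    ext j
    simp [Finset.sum_apply, Pi.single_apply, hdd]
  refine exists_calc dd fM fmul fone fadd fzero ddsum leib D hcov χ ?_
  intro i a
  rw [hdd, hdX]
  have hm : del comulX χ π i a = ∑ l, T comulX (χ l) a * SP π l i := by simp [del]
  have hεT : ∀ l, Coalgebra.counit (R := ℂ) (T comulX (χ l) a) = χ l a :=
    fun l => counit_T hcomulX (χ l) a
  have hεS : ∀ l, Coalgebra.counit (R := ℂ) (SP π l i) = if l = i then 1 else 0 := by
    intro l
    rw [← hεπ]
    exact HopfAlgebra.counit_antipode (R := ℂ) (π l i)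
  rw [hm]
  simp [hεT, hεS]

end Stmt6Aux

/-- classification theorem: the assignment `(Γ, d) ↦ {ε∘∂_1, …, ε∘∂_M}`
is a one-to-one correspondence between covariant free first order differential calculi
on `X` (up to isomorphism) and families `{χ_1, …, χ_M} ⊆ X°` satisfying the conditions
of `GoodChi`. -/
theorem stmt6
    (hcomulX : ∀ a : X,
      (TensorProduct.map (LinearMap.id) X.val.toLinearMap) (comulX a)
        = Coalgebra.comul (R := ℂ) (a : H))
    (π : Fin M → Fin M → H)
    (hπ : ∀ i, comulX (e i) = ∑ j, π i j ⊗ₜ[ℂ] e j)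
    (hΔπ : ∀ i j, Coalgebra.comul (R := ℂ) (π i j) = ∑ k, π i k ⊗ₜ[ℂ] π k j)
    (hεπ : ∀ i j, Coalgebra.counit (R := ℂ) (π i j) = if i = j then 1 else 0) :
    -- the assignment is well defined and lands in the good families
    (∀ c : CovCalc X comulX e, ∃ χ, Corr c χ ∧ GoodChi X comulX e π χ) ∧
    -- surjectivity: every good family arises from a calculus
    (∀ χ, GoodChi X comulX e π χ → ∃ c : CovCalc X comulX e, Corr c χ) ∧
    -- injectivity up to isomorphism
    (∀ (c c' : CovCalc X comulX e) (χ : Fin M → (X →ₗ[ℂ] ℂ)),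
      GoodChi X comulX e π χ → Corr c χ → Corr c' χ → c.Iso c') := by
  exact ⟨fun c => Stmt6Aux.part1 hcomulX π hπ hΔπ hεπ c,
    fun χ hg => Stmt6Aux.part2 hcomulX π hπ hΔπ hεπ χ hg,
    fun c c' χ _ hc hc' => Stmt6Aux.part3 hcomulX π hπ hΔπ hεπ c c' χ hc hc'⟩
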